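/- Let G = (V ∪ {s}, E) be a finite sandpile graph, Q ⊆ V, and fix for each x ∈ V a strict total order <_x on the edges of G incident to x. For η ∈ R_G, let t(η) = { e_x : x ∈ V } be the spanning tree assigned to η by the burning bijection based on Q, each edge e_x oriented from x toward its other endpoint. Then η ∈ E_{V,Q} (phase one of burning based on Q burns all of V \ Q) if and only if t(η) contains no edge pointing from V \ Q into Q, i.e., for every x ∈ V \ Q the endpoint of e_x other than x does not lie in Q. -/

import Mathlib

open scoped Classical

namespace Sandpile

/-- A finite sandpile multigraph on vertex set `α` (which plays the role of `V ∪ {s}`),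
given by a distinguished sink and symmetric edge multiplicities. -/
structure Graph (α : Type*) where
  sink : α
  b : α → α → ℕ

namespace Graph

variable {α : Type*} [Fintype α] [DecidableEq α] (G : Graph α)

/-- The non-sink vertices (the set `V`). -/
def VSet : Finset α := Finset.univ.erase G.sink

/-- Degree restricted to a finite set of vertices: `deg_F(x) = ∑_{y ∈ F} b_{xy}`. -/
def degIn (F : Finset α) (x : α) : ℕ := ∑ y ∈ F, G.b x y

/-- Total degree `deg_G(x)`. -/
def deg (x : α) : ℕ := ∑ y, G.b x y

/-- `G` is a genuine finite sandpile graph: symmetric multiplicities, no loops, connected. -/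
def IsSandpileGraph : Prop :=
  (∀ x y, G.b x y = G.b y x) ∧ (∀ x, G.b x x = 0) ∧
    ∀ x y : α, Relation.ReflTransGen (fun u v => 0 < G.b u v) x y

/-- Connectivity of the subgraph induced on the vertex set `S`. -/
def ConnectedOn (S : Set α) : Prop :=
  ∀ x ∈ S, ∀ y ∈ S,
    Relation.ReflTransGen (fun u v => u ∈ S ∧ v ∈ S ∧ 0 < G.b u v) x y

/-- A sandpile is stable if every non-sink vertex carries fewer particles than its degree. -/
def Stable (η : α → ℕ) : Prop := ∀ x ∈ G.VSet, η x < G.deg x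

/-- `η` is ample for `F` if some vertex of `F` has at least `deg_F` particles. -/
def AmpleFor (η : α → ℕ) (F : Finset α) : Prop := ∃ x ∈ F, G.degIn F x ≤ η x

/-- Dhar's burning test: recurrent = stable and ample for every nonempty `F ⊆ V`. -/
def Recurrent (η : α → ℕ) : Prop :=
  G.Stable η ∧ ∀ F ⊆ G.VSet, F.Nonempty → G.AmpleFor η F

/-- Remove one particle at `w` (`η - δ_w`). -/
def SubOne (η : α → ℕ) (w : α) : α → ℕ := fun x => if x = w then η x - 1 else η x

/-- `η` and `ξ` agree on `W` (restriction `η_W = ξ_W`). -/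
def EqOn (η ξ : α → ℕ) (W : Finset α) : Prop := ∀ x ∈ W, η x = ξ x

/-- `ξ` is (generalized) minimal on `W`: it extends to a recurrent sandpile, and no
recurrent extension stays recurrent after removing a particle from a vertex of `W`.
(`η - δ_w ∉ R_G` holds automatically if `η w = 0`, as then `η - δ_w` is not a configuration.) -/
def Minimal (W : Finset α) (ξ : α → ℕ) : Prop :=
  (∃ η, G.Recurrent η ∧ EqOn η ξ W) ∧
    ∀ η, G.Recurrent η → EqOn η ξ W → ∀ w ∈ W, ¬(1 ≤ η w ∧ G.Recurrent (SubOne η w))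

/-- `ν_G[P]`: the uniform probability of the event `P` under the uniform measure on
recurrent configurations (configurations are normalized to vanish at the sink). -/
noncomputable def prob (P : (α → ℕ) → Prop) : ℝ :=
  (Nat.card {η : α → ℕ // η G.sink = 0 ∧ G.Recurrent η ∧ P η} : ℝ) /
    (Nat.card {η : α → ℕ // η G.sink = 0 ∧ G.Recurrent η} : ℝ)

/-- The graph Laplacian with the sink row and column deleted. -/
noncomputable def lapRed :
    Matrix {x : α // x ≠ G.sink} {x : α // x ≠ G.sink} ℝ :=
  Matrix.of fun x y =>
    if (x : α) = (y : α) then (G.deg ↑x : ℝ) else -(G.b ↑x ↑y : ℝ)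

/-- `H = (Δ')⁻¹`, extended by `0` on the sink. -/
noncomputable def Hfun (x y : α) : ℝ :=
  if hx : x = G.sink then 0
  else if hy : y = G.sink then 0
  else (G.lapRed)⁻¹ ⟨x, hx⟩ ⟨y, hy⟩

/-- Oriented edges of the multigraph `G`: an edge from `p.1` to `p.2.1`, with copy
index `p.2.2` (parallel edges are distinct). -/
abbrev OEdge (G : Graph α) : Type _ := {p : α × α × ℕ // p.2.2 < G.b p.1 p.2.1}

/-- `K_G(e,f) = δ_{ef} - Y_G(e,f)` where `Y_G` is the transfer current matrix. -/
noncomputable def Kmat (e f : G.OEdge) : ℝ :=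
  (if e = f then 1 else 0) -
    (G.Hfun e.1.1 f.1.1 - G.Hfun e.1.1 f.1.2.1 - G.Hfun e.1.2.1 f.1.1 +
      G.Hfun e.1.2.1 f.1.2.1)

/-- Unburnt sets of phase one of the burning algorithm based on `Q`:
`U_0 = V`, `U_i = U_{i-1} \ B_i` with `B_i = {x ∈ U_{i-1} \ Q : η x ≥ deg_{U_{i-1}} x}`. -/
def U1 (η : α → ℕ) (Q : Finset α) : ℕ → Finset α
  | 0 => G.VSet
  | i + 1 => (U1 η Q i).filter fun x => x ∈ Q ∨ η x < G.degIn (U1 η Q i) x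

/-- The final unburnt set `U^{(1)}_I` of phase one (the sequence `U1` is decreasing,
hence stabilizes after at most `|α|` steps). -/
def U1lim (η : α → ℕ) (Q : Finset α) : Finset α := G.U1 η Q (Fintype.card α)

/-- Unburnt sets of phase two of the burning algorithm based on `Q`. -/
def U2 (η : α → ℕ) (Q : Finset α) : ℕ → Finset α
  | 0 => G.U1lim η Q
  | i + 1 => (U2 η Q i).filter fun x => η x < G.degIn (U2 η Q i) x

/-- Recurrence in the wired graph `G_W` (note `deg_{G_W}(x) = deg_G(x)` for `x ∈ W`,
and `deg_F` for `F ⊆ W` is the same in `G_W` and `G`). -/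
def WiredRecurrent (W : Finset α) (ξ : α → ℕ) : Prop :=
  (∀ x ∈ W, ξ x < G.deg x) ∧ ∀ F ⊆ W, F.Nonempty → ∃ x ∈ F, G.degIn F x ≤ ξ x

/-- `ξ` is minimal in the wired graph `G_W`. -/
def WiredMinimal (W : Finset α) (ξ : α → ℕ) : Prop :=
  G.WiredRecurrent W ξ ∧ ∀ w ∈ W, ¬(1 ≤ ξ w ∧ G.WiredRecurrent W (SubOne ξ w))

/-- Entry points `E(ξ,W)` of `ξ ∈ R_{G_W}`: vertices burnable at the first step. -/
def entryPoints (W : Finset α) (ξ : α → ℕ) : Finset α :=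
  W.filter fun w => G.degIn W w ≤ ξ w

/-- `x` is burnable given the burnt set `S`: `η(x) ≥ deg_G(x) − ∑_{y ∈ S} b_{xy}`. -/
def Burnable (η : α → ℕ) (S : Finset α) (x : α) : Prop :=
  G.degIn (Finset.univ \ S) x ≤ η x

/-- A burning sequence starting from the burnt set `S`. -/
def IsBurnSeq (η : α → ℕ) : Finset α → List α → Prop
  | _, [] => True
  | S, x :: l => x ∉ S ∧ G.Burnable η S x ∧ IsBurnSeq η (insert x S) l

/-- `B` is a burnt set for `η`: some burning sequence from `{s}` burns exactly `B`. -/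
def IsBurntSet (η : α → ℕ) (B : Finset α) : Prop :=
  ∃ l : List α, G.IsBurnSeq η {G.sink} l ∧ l.toFinset = B

/-- Reachability within the vertex set `S`. -/
def ReachIn (S : Set α) (x y : α) : Prop :=
  Relation.ReflTransGen (fun u v => u ∈ S ∧ v ∈ S ∧ 0 < G.b u v) x y

/-- `C` is a connected component of the subgraph induced on `(V ∪ {s}) \ W`
that does not contain the sink. -/
def IsHoleComp (W C : Finset α) : Prop :=
  C.Nonempty ∧ G.sink ∉ C ∧
    ∀ x ∈ C, ∀ y : α, y ∈ C ↔ y ∉ W ∧ G.ReachIn {a : α | a ∉ W} x y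

/-- Adjacency induced by a finite set `t` of (undirected, indexed) edges. -/
def edgeRel (t : Finset (Sym2 α × ℕ)) (u v : α) : Prop := ∃ k : ℕ, (s(u, v), k) ∈ t

/-- `t` is a spanning tree of the multigraph `G`: it consists of edges of `G`
(parallel edges distinct), it spans (connected), and every edge is a bridge
(equivalently, it is acyclic). -/
def IsSpanningTree (t : Finset (Sym2 α × ℕ)) : Prop :=
  (∀ p ∈ t, ∃ x y : α, p.1 = s(x, y) ∧ p.2 < G.b x y) ∧
  (∀ u v : α, Relation.ReflTransGen (edgeRel t) u v) ∧
  ∀ p ∈ t, ∀ x y : α, p.1 = s(x, y) →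
    ¬ Relation.ReflTransGen (edgeRel (t.erase p)) x y

/-- Adjacency induced by a set of (undirected, indexed) edges. -/
def edgeRelSet (t : Set (Sym2 α × ℕ)) (u v : α) : Prop := ∃ k : ℕ, (s(u, v), k) ∈ t

/-- Set version of `IsSpanningTree`. -/
def IsSpanningTreeSet (t : Set (Sym2 α × ℕ)) : Prop :=
  (∀ p ∈ t, ∃ x y : α, p.1 = s(x, y) ∧ p.2 < G.b x y) ∧
  (∀ u v : α, Relation.ReflTransGen (edgeRelSet t) u v) ∧
  ∀ p ∈ t, ∀ x y : α, p.1 = s(x, y) →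
    ¬ Relation.ReflTransGen (edgeRelSet (t \ {p})) x y

/-- The step at which `x` burns in phase one (0 for the sink; `sInf ∅ = 0` if `x`
never burns in phase one). -/
noncomputable def p1time (η : α → ℕ) (Q : Finset α) (x : α) : ℕ :=
  sInf {i : ℕ | x ∉ G.U1 η Q i}

/-- The step at which `x` burns in phase two. -/
noncomputable def p2time (η : α → ℕ) (Q : Finset α) (x : α) : ℕ :=
  sInf {i : ℕ | x ∉ G.U2 η Q i}

/-- Vertices burnt at step `i` of phase one (`B^{(1)}_0 = {s}`). -/
def B1 (η : α → ℕ) (Q : Finset α) : ℕ → Finset α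
  | 0 => {G.sink}
  | i + 1 => G.U1 η Q i \ G.U1 η Q (i + 1)

/-- Vertices burnt at step `i` of phase two (`B^{(2)}_0` = everything burnt in phase
one, including the sink). -/
def B2 (η : α → ℕ) (Q : Finset α) : ℕ → Finset α
  | 0 => Finset.univ \ G.U1lim η Q
  | i + 1 => G.U2 η Q i \ G.U2 η Q (i + 1)

/-- The set `B^{(p)}_{i-1}` of vertices burnt at the step preceding the step at which
`x` burns (in the appropriate phase). -/
noncomputable def prevBurnt (η : α → ℕ) (Q : Finset α) (x : α) : Finset α :=
  if x ∈ G.U1lim η Q then G.B2 η Q (G.p2time η Q x - 1)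
  else G.B1 η Q (G.p1time η Q x - 1)

/-- The set `D = B^{(p)}_0 ∪ ⋯ ∪ B^{(p)}_{i-1}` of vertices burnt strictly before `x`
in the phase in which `x` burns. -/
noncomputable def burntBefore (η : α → ℕ) (Q : Finset α) (x : α) : Finset α :=
  if x ∈ G.U1lim η Q then Finset.univ \ G.U2 η Q (G.p2time η Q x - 1)
  else Finset.univ \ G.U1 η Q (G.p1time η Q x - 1)

/-- `j = η(x) − deg_G(x) + n_x` with `n_x = ∑_{y ∈ D} b_{xy}`. -/
noncomputable def jX (η : α → ℕ) (Q : Finset α) (x : α) : ℕ :=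
  η x + G.degIn (G.burntBefore η Q x) x - G.deg x

/-- The defining property of the edge `e_x` of the burning bijection based on `Q`:
`e_x` has tail `x`, head burnt at the previous step, and exactly `j` smaller elements
of `P_x` under the given edge order `lt x`. -/
def EdgeSpec (lt : α → G.OEdge → G.OEdge → Prop) (η : α → ℕ) (Q : Finset α)
    (x : α) (e : G.OEdge) : Prop :=
  e.1.1 = x ∧ e.1.2.1 ∈ G.prevBurnt η Q x ∧
    {f : G.OEdge | f.1.1 = x ∧ f.1.2.1 ∈ G.prevBurnt η Q x ∧ lt x f e}.ncard =
      G.jX η Q x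

/-- The (oriented) spanning tree `t(η) = {e_x : x ∈ V}` assigned to `η` by the
burning bijection based on `Q`. -/
def treeOf (lt : α → G.OEdge → G.OEdge → Prop) (η : α → ℕ) (Q : Finset α) :
    Set G.OEdge :=
  {e | ∃ x ∈ G.VSet, G.EdgeSpec lt η Q x e}

/-- Forget the orientation of an oriented edge. -/
def undir (e : G.OEdge) : Sym2 α × ℕ := (s(e.1.1, e.1.2.1), e.1.2.2)

/-- Total burning order: phase-one vertices first (at their phase-one step), then
phase-two vertices. -/
noncomputable def burnOrder (η : α → ℕ) (Q : Finset α) (x : α) : ℕ :=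
  if x ∈ G.U1lim η Q then Fintype.card α + 1 + G.p2time η Q x else G.p1time η Q x

/-- Edge multiplicities of the auxiliary graph `G_W^*` (on vertex set `W ∪ {s}`):
`b*_{xy} = b_{xy}` for `x,y ∈ W`; `b*_{xs} = ∑_{z ∉ W} b_{xz}` for `x ∈ Q` and
`b*_{xs} = 0` for `x ∈ W \ Q`. -/
def bstar (Q W : Finset α) (x y : α) : ℕ :=
  if x ∈ W ∧ y ∈ W then G.b x y
  else if x ∈ W ∧ y = G.sink then
    if x ∈ Q then ∑ z ∈ Finset.univ \ W, G.b x z else 0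
  else if y ∈ W ∧ x = G.sink then
    if y ∈ Q then ∑ z ∈ Finset.univ \ W, G.b z y else 0
  else 0

/-- Recurrence in the auxiliary graph `G_W^*`. -/
def StarRecurrent (Q W : Finset α) (ζ : α → ℕ) : Prop :=
  (∀ x ∈ W, ζ x < ∑ y ∈ insert G.sink W, G.bstar Q W x y) ∧
    ∀ F ⊆ W, F.Nonempty → ∃ x ∈ F, (∑ y ∈ F, G.bstar Q W x y) ≤ ζ x

end Graph

end Sandpile

open Sandpile

/-! No vertex of `Q` ever burns in phase one, so if phase one burns all of `V \ Q`, then each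
`x ∉ Q` has its edge `e_x` pointing to a vertex outside `Q`. Conversely, suppose no edge of `t(η)`
points from `V \ Q` into `Q`. A vertex `x ∉ Q` that survives phase one cannot burn at the first
step of phase two, because phase one would already have burnt it; and if it burns at a later step,
then `e_x` points to a vertex burnt one step earlier in phase two, which lies outside `Q` by
assumption. By induction no vertex outside `Q` burns in phase two, whereas phase two burns
everything because `η` is ample for every nonempty subset of `V`; so phase one leaves only `Q`. -/

namespace Sandpile

theorem exists_card_filter_eq_of_isChain {β : Type*} {r : β → β → Prop} [IsStrictOrder β r]
    {s : Finset β} (hs : IsChain r (s : Set β)) {j : ℕ} (hj : j < s.card) :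
    ∃ e ∈ s, (s.filter fun f => r f e).card = j := by
  let rank : β → ℕ := fun e => (s.filter fun f => r f e).card
  have rank_lt {e f : β} (he : e ∈ s) (hef : r e f) : rank e < rank f := by
    refine Finset.card_lt_card ((Finset.ssubset_iff_of_subset ?_).2 ⟨e, ?_, ?_⟩)
    · exact Finset.monotone_filter_right s fun _ _ hge => _root_.trans hge hef
    · exact Finset.mem_filter.2 ⟨he, hef⟩
    · exact fun h => irrefl e (Finset.mem_filter.1 h).2
  have rank_mapsTo : Set.MapsTo rank s (Finset.range s.card) := fun e he =>
    Finset.mem_coe.2 <| Finset.mem_range.2 <| Finset.card_lt_card <|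
      Finset.filter_ssubset.2 ⟨e, he, irrefl e⟩
  have rank_injOn : Set.InjOn rank s := by
    intro e he f hf hef
    by_contra hne
    rcases hs he hf hne with h | h
    · exact (rank_lt he h).ne hef
    · exact (rank_lt hf h).ne' hef
  exact Finset.surjOn_of_injOn_of_card_le rank rank_mapsTo rank_injOn (by simp)
    (Finset.mem_coe.2 (Finset.mem_range.2 hj))

theorem apply_card_succ_eq_of_antitone {α : Type*} [Fintype α] {S : ℕ → Finset α}
    (hS : Antitone S) (hstab : ∀ i, S (i + 1) = S i → S (i + 2) = S (i + 1)) :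
    S (Fintype.card α + 1) = S (Fintype.card α) := by
  have card_compl_iff (i : ℕ) :
      (S i)ᶜ.card = (S (i + 1))ᶜ.card ↔ S (i + 1) = S i := by
    refine ⟨fun h => ?_, fun h => by rw [h]⟩
    exact (compl_injective (Finset.eq_of_subset_of_card_le
      (Finset.compl_subset_compl.2 (hS i.le_succ)) h.ge)).symm
  refine (card_compl_iff _).1 (Nat.stabilises_of_monotone
    (f := fun i => (S i)ᶜ.card) (b := Fintype.card α) ?_ ?_ ?_ (Nat.le_succ _)).symm
  · exact fun i j hij => Finset.card_le_card (Finset.compl_subset_compl.2 (hS hij))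
  · exact fun i => Finset.card_le_univ _
  · exact fun i h => (card_compl_iff (i + 1)).2 (hstab i ((card_compl_iff i).1 h))

namespace Graph

section Edges

variable {α : Type*} (G : Graph α)

theorem degIn_sdiff_add_degIn [DecidableEq α] {F F' : Finset α} (h : F ⊆ F') (x : α) :
    G.degIn (F' \ F) x + G.degIn F x = G.degIn F' x :=
  Finset.sum_sdiff h

/-- The edges from `x` into `B`, each oriented away from `x`; for `B` the set of vertices burnt at
the step before `x`, this is the set `P_x` from which the burning bijection selects `e_x`. -/
def edgesInto (x : α) (B : Finset α) : Finset G.OEdge :=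
  (B.sigma fun y => (Finset.univ : Finset (Fin (G.b x y)))).map
    { toFun := fun p => ⟨(x, p.1, p.2), p.2.2⟩
      inj' := by
        rintro ⟨y, k, hk⟩ ⟨z, l, hl⟩ h
        simp only [Subtype.mk.injEq, Prod.mk.injEq, true_and] at h
        obtain ⟨rfl, rfl⟩ := h
        rfl }

theorem card_edgesInto (x : α) (B : Finset α) : (G.edgesInto x B).card = G.degIn B x := by
  simp [edgesInto, degIn]

variable {G}

theorem mem_edgesInto {x : α} {B : Finset α} {e : G.OEdge} :
    e ∈ G.edgesInto x B ↔ e.1.1 = x ∧ e.1.2.1 ∈ B := by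
  obtain ⟨⟨a, y, k⟩, hk⟩ := e
  constructor
  · intro h
    obtain ⟨⟨z, l⟩, hz, h⟩ := Finset.mem_map.1 h
    cases h
    exact ⟨rfl, (Finset.mem_sigma.1 hz).1⟩
  · rintro ⟨rfl, hy⟩
    exact Finset.mem_map.2 ⟨⟨y, k, hk⟩, by simpa using hy, rfl⟩

end Edges

variable {α : Type*} [Fintype α] [DecidableEq α]
  {G : Graph α} {η : α → ℕ} {Q : Finset α} {x : α} {i : ℕ}

section PhaseOne

theorem mem_U1_succ :
    x ∈ G.U1 η Q (i + 1) ↔ x ∈ G.U1 η Q i ∧ (x ∈ Q ∨ η x < G.degIn (G.U1 η Q i) x) :=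
  Finset.mem_filter

theorem antitone_U1 : Antitone (G.U1 η Q) :=
  antitone_nat_of_succ_le fun _ => Finset.filter_subset _ _

theorem U1_card_succ : G.U1 η Q (Fintype.card α + 1) = G.U1lim η Q :=
  apply_card_succ_eq_of_antitone antitone_U1 fun i h => by
    rw [U1, h]
    exact h

theorem U1lim_subset_VSet : G.U1lim η Q ⊆ G.VSet :=
  antitone_U1 (Nat.zero_le _)

theorem subset_U1 (hQ : Q ⊆ G.VSet) : ∀ i, Q ⊆ G.U1 η Q i
  | 0 => hQ
  | i + 1 => fun _ hx => mem_U1_succ.2 ⟨subset_U1 hQ i hx, .inl hx⟩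

theorem lt_degIn_U1lim (hx : x ∈ G.U1lim η Q) (hxQ : x ∉ Q) :
    η x < G.degIn (G.U1lim η Q) x := by
  rw [← U1_card_succ] at hx
  exact (mem_U1_succ.1 hx).2.resolve_left hxQ

theorem disjoint_B1 (hQ : Q ⊆ G.VSet) : ∀ i, Disjoint (G.B1 η Q i) Q
  | 0 => Finset.disjoint_singleton_left.2 fun h => Finset.notMem_erase _ _ (hQ h)
  | i + 1 => Finset.sdiff_disjoint.mono_right (subset_U1 hQ (i + 1))

theorem disjoint_prevBurnt (hQ : Q ⊆ G.VSet) (hx : x ∉ G.U1lim η Q) :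
    Disjoint (G.prevBurnt η Q x) Q := by
  rw [prevBurnt, if_neg hx]
  exact disjoint_B1 hQ _

end PhaseOne

section PhaseTwo

theorem mem_U2_succ :
    x ∈ G.U2 η Q (i + 1) ↔ x ∈ G.U2 η Q i ∧ η x < G.degIn (G.U2 η Q i) x :=
  Finset.mem_filter

theorem antitone_U2 : Antitone (G.U2 η Q) :=
  antitone_nat_of_succ_le fun _ => Finset.filter_subset _ _

theorem U2_subset_U1lim : G.U2 η Q i ⊆ G.U1lim η Q :=
  antitone_U2 (Nat.zero_le i)

theorem U2_card_succ : G.U2 η Q (Fintype.card α + 1) = G.U2 η Q (Fintype.card α) :=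
  apply_card_succ_eq_of_antitone antitone_U2 fun i h => by
    rw [U2, h]
    exact h

theorem U2_card_eq_empty (hη : ∀ F ⊆ G.VSet, F.Nonempty → G.AmpleFor η F) :
    G.U2 η Q (Fintype.card α) = ∅ := by
  by_contra hne
  obtain ⟨x, hx, hample⟩ := hη _ (U2_subset_U1lim.trans U1lim_subset_VSet)
    (Finset.nonempty_iff_ne_empty.2 hne)
  rw [← U2_card_succ] at hx
  exact hample.not_gt (mem_U2_succ.1 hx).2

theorem p2time_eq (hx : x ∈ G.U2 η Q i) (hx' : x ∉ G.U2 η Q (i + 1)) :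
    G.p2time η Q x = i + 1 := by
  refine (Nat.sInf_upward_closed_eq_succ_iff ?_ i).2 ⟨hx', not_not.2 hx⟩
  exact fun _ _ hij hi hj => hi (antitone_U2 hij hj)

theorem prevBurnt_eq_B2 (hx : x ∈ G.U2 η Q i) (hx' : x ∉ G.U2 η Q (i + 1)) :
    G.prevBurnt η Q x = G.B2 η Q i := by
  rw [prevBurnt, if_pos (U2_subset_U1lim hx), p2time_eq hx hx', Nat.add_sub_cancel]

theorem burntBefore_eq_univ_sdiff_U2 (hx : x ∈ G.U2 η Q i) (hx' : x ∉ G.U2 η Q (i + 1)) :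
    G.burntBefore η Q x = Finset.univ \ G.U2 η Q i := by
  rw [burntBefore, if_pos (U2_subset_U1lim hx), p2time_eq hx hx', Nat.add_sub_cancel]

theorem jX_lt_degIn_prevBurnt (hx : x ∈ G.U2 η Q (i + 1)) (hx' : x ∉ G.U2 η Q (i + 2)) :
    G.jX η Q x < G.degIn (G.prevBurnt η Q x) x := by
  have hburn : G.degIn (G.U2 η Q (i + 1)) x ≤ η x :=
    not_lt.1 fun h => hx' (mem_U2_succ.2 ⟨hx, h⟩)
  have hwait : η x < G.degIn (G.U2 η Q i) x := (mem_U2_succ.1 hx).2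
  have hdeg : G.degIn (G.burntBefore η Q x) x + G.degIn (G.U2 η Q (i + 1)) x = G.deg x := by
    rw [burntBefore_eq_univ_sdiff_U2 hx hx']
    exact G.degIn_sdiff_add_degIn (Finset.subset_univ _) x
  have hprev : G.degIn (G.prevBurnt η Q x) x + G.degIn (G.U2 η Q (i + 1)) x =
      G.degIn (G.U2 η Q i) x := by
    rw [prevBurnt_eq_B2 hx hx']
    exact G.degIn_sdiff_add_degIn (antitone_U2 i.le_succ) x
  rw [jX]
  omega

end PhaseTwo

section Tree

variable {lt : α → G.OEdge → G.OEdge → Prop}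

theorem exists_edgeSpec [IsStrictOrder G.OEdge (lt x)]
    (hlt : IsChain (lt x) {e : G.OEdge | e.1.1 = x})
    (hj : G.jX η Q x < G.degIn (G.prevBurnt η Q x) x) :
    ∃ e, G.EdgeSpec lt η Q x e := by
  have hchain : IsChain (lt x) (G.edgesInto x (G.prevBurnt η Q x) : Set G.OEdge) :=
    hlt.mono fun e he => (mem_edgesInto.1 he).1
  rw [← card_edgesInto] at hj
  obtain ⟨e, he, hrank⟩ := exists_card_filter_eq_of_isChain hchain hj
  obtain ⟨htail, hhead⟩ := mem_edgesInto.1 he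
  refine ⟨e, htail, hhead, ?_⟩
  rw [← hrank, ← Set.ncard_coe_finset]
  congr 1
  ext f
  simp only [Set.mem_ofPred_eq, Finset.coe_filter, mem_edgesInto, and_assoc]

theorem head_notMem_of_U1lim_eq (hQ : Q ⊆ G.VSet) (hlim : G.U1lim η Q = Q) {e : G.OEdge}
    (he : e ∈ G.treeOf lt η Q) (htail : e.1.1 ∉ Q) : e.1.2.1 ∉ Q := by
  obtain ⟨x, -, rfl, hhead, -⟩ := he
  exact Finset.disjoint_left.1 (disjoint_prevBurnt hQ (hlim.symm ▸ htail)) hhead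

theorem exists_mem_treeOf_head_mem_B2 [IsStrictOrder G.OEdge (lt x)]
    (hlt : IsChain (lt x) {e : G.OEdge | e.1.1 = x})
    (hx : x ∈ G.U2 η Q (i + 1)) (hx' : x ∉ G.U2 η Q (i + 2)) :
    ∃ e ∈ G.treeOf lt η Q, e.1.1 = x ∧ e.1.2.1 ∈ G.B2 η Q (i + 1) := by
  obtain ⟨e, he⟩ := exists_edgeSpec hlt (jX_lt_degIn_prevBurnt hx hx')
  refine ⟨e, ⟨x, U1lim_subset_VSet (U2_subset_U1lim hx), he⟩, he.1, ?_⟩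
  rw [← prevBurnt_eq_B2 hx hx']
  exact he.2.1

theorem U1lim_sdiff_subset_U2 [∀ x, IsStrictOrder G.OEdge (lt x)]
    (hlt : ∀ x, IsChain (lt x) {e : G.OEdge | e.1.1 = x})
    (hedges : ∀ e ∈ G.treeOf lt η Q, e.1.1 ∉ Q → e.1.2.1 ∉ Q) :
    ∀ i, G.U1lim η Q \ Q ⊆ G.U2 η Q i
  | 0 => Finset.sdiff_subset
  | 1 => fun x hx => by
    obtain ⟨hxU, hxQ⟩ := Finset.mem_sdiff.1 hx
    exact mem_U2_succ.2 ⟨hxU, lt_degIn_U1lim hxU hxQ⟩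
  | i + 2 => fun x hx => by
    by_contra hburnt
    obtain ⟨e, he, rfl, hhead⟩ := exists_mem_treeOf_head_mem_B2 (hlt x)
      (U1lim_sdiff_subset_U2 hlt hedges (i + 1) hx) hburnt
    obtain ⟨hheadU, hheadBurnt⟩ := Finset.mem_sdiff.1 hhead
    have hheadQ : e.1.2.1 ∉ Q := hedges e he (Finset.mem_sdiff.1 hx).2
    exact hheadBurnt (U1lim_sdiff_subset_U2 hlt hedges (i + 1)
      (Finset.mem_sdiff.2 ⟨U2_subset_U1lim hheadU, hheadQ⟩))

end Tree

end Graph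

end Sandpile

theorem statement_17_general {α : Type*} [Fintype α] [DecidableEq α] (G : Sandpile.Graph α)
    {Q : Finset α} (hQ : Q ⊆ G.VSet) (lt : α → G.OEdge → G.OEdge → Prop)
    [∀ x, IsStrictOrder G.OEdge (lt x)]
    (hlt : ∀ x, IsChain (lt x) {e : G.OEdge | e.1.1 = x})
    {η : α → ℕ} (hη : ∀ F ⊆ G.VSet, F.Nonempty → G.AmpleFor η F) :
    G.U1lim η Q = Q ↔ ∀ e ∈ G.treeOf lt η Q, e.1.1 ∉ Q → e.1.2.1 ∉ Q := by
  refine ⟨fun hlim _ => Graph.head_notMem_of_U1lim_eq hQ hlim, fun hedges => ?_⟩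
  have hsurvive : G.U1lim η Q \ Q ⊆ ∅ := by
    rw [← Graph.U2_card_eq_empty (Q := Q) hη]
    exact Graph.U1lim_sdiff_subset_U2 hlt hedges _
  exact (Finset.sdiff_eq_empty_iff_subset.1 (Finset.subset_empty.1 hsurvive)).antisymm
    (Graph.subset_U1 hQ _)

/-- Under the burning bijection based on `Q`, the event `E_{V,Q}`
(phase one burns all of `V \ Q`) corresponds exactly to the event that the spanning
tree `t(η)` contains no edge pointing from `V \ Q` into `Q`. -/
theorem statement_17 {α : Type*} [Fintype α] [DecidableEq α] (G : Sandpile.Graph α)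
    (hG : G.IsSandpileGraph) (Q : Finset α) (hQ : Q ⊆ G.VSet)
    (lt : α → G.OEdge → G.OEdge → Prop)
    (hirr : ∀ x : α, ∀ e : G.OEdge, ¬ lt x e e)
    (htrans : ∀ x : α, ∀ e f g : G.OEdge, lt x e f → lt x f g → lt x e g)
    (htri : ∀ x : α, ∀ e f : G.OEdge, e.1.1 = x → f.1.1 = x →
      e = f ∨ lt x e f ∨ lt x f e) :
    ∀ η : α → ℕ, G.Recurrent η →
      (G.U1lim η Q = Q ↔
        ∀ e ∈ G.treeOf lt η Q, e.1.1 ∉ Q → e.1.2.1 ∉ Q) := by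
  have (x : α) : IsStrictOrder G.OEdge (lt x) := { irrefl := hirr x, trans := htrans x }
  exact fun _ hη => statement_17_general G hQ lt
    (fun x e he f hf hne => (htri x e f he hf).resolve_left hne) hη.2
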